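/- For a fixed vector θ ∈ ℝ^r and a random vector Z ∈ ℝ^r with log-concave probability density, if g : ℝ^r × ℝ^r → ℝ is concave, then the function h(θ) = P(g(θ, Z) ≥ 0) is log-concave on ℝ^r. -/

import Mathlib

open MeasureTheory Set

section PrekopaLeindler

open scoped ENNReal Pointwise

/-- Brunn–Minkowski on the line, for compact sets. -/
theorem volume_add_le_of_isCompact_add_subset {A B C : Set ℝ} (hA : IsCompact A)
    (hB : IsCompact B) (hA0 : A.Nonempty) (hB0 : B.Nonempty)
    (h : ∀ x ∈ A, ∀ y ∈ B, x + y ∈ C) : volume A + volume B ≤ volume C := by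
  obtain ⟨a, haA, ha⟩ := hA.exists_isGreatest hA0
  obtain ⟨b, hbB, hb⟩ := hB.exists_isLeast hB0
  have hdisj : AEDisjoint volume ((· + b) '' A) ((a + ·) '' B) := by
    refine measure_mono_null (t := {a + b}) ?_ (measure_singleton _)
    rintro _ ⟨⟨x, hx, rfl⟩, ⟨y, hy, hxy⟩⟩
    have := ha hx
    have := hb hy
    simp only at hxy ⊢
    rw [mem_singleton_iff]
    linarith
  have hmeas : NullMeasurableSet ((a + ·) '' B) volume :=
    (hB.image (continuous_const_add a)).measurableSet.nullMeasurableSet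
  calc volume A + volume B = volume ((· + b) '' A) + volume ((a + ·) '' B) := by
        simp [image_add_right, image_add_left]
    _ = volume ((· + b) '' A ∪ (a + ·) '' B) := (measure_union₀ hmeas hdisj).symm
    _ ≤ volume C := by
        refine measure_mono (union_subset ?_ ?_)
        · rintro _ ⟨x, hx, rfl⟩
          exact h x hx b hbB
        · rintro _ ⟨y, hy, rfl⟩
          exact h a haA y hy

/-- Brunn–Minkowski on the line, for measurable sets. -/
theorem volume_add_le_of_add_subset {A B C : Set ℝ} (hA : MeasurableSet A)
    (hB : MeasurableSet B) (hA0 : A.Nonempty) (hB0 : B.Nonempty)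
    (h : ∀ x ∈ A, ∀ y ∈ B, x + y ∈ C) : volume A + volume B ≤ volume C := by
  obtain ⟨a, ha⟩ := hA0
  obtain ⟨b, hb⟩ := hB0
  rw [hA.measure_eq_iSup_isCompact, hB.measure_eq_iSup_isCompact]
  simp only [iSup_and']
  refine ENNReal.biSup_add_biSup_le' ⟨∅, empty_subset _, isCompact_empty⟩
    ⟨∅, empty_subset _, isCompact_empty⟩ ?_
  rintro K ⟨hKA, hK⟩ L ⟨hLB, hL⟩
  refine (add_le_add (measure_mono (subset_insert a K)) (measure_mono (subset_insert b L))).trans ?_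
  exact volume_add_le_of_isCompact_add_subset (hK.insert a) (hL.insert b) (insert_nonempty _ _)
    (insert_nonempty _ _) fun x hx y hy ↦
      h x (insert_subset ha hKA hx) y (insert_subset hb hLB hy)

theorem volume_convexCombination_le {A B C : Set ℝ} (hA : MeasurableSet A)
    (hB : MeasurableSet B) (hA0 : A.Nonempty) (hB0 : B.Nonempty) {t : ℝ} (ht0 : 0 < t)
    (ht1 : t < 1) (h : ∀ x ∈ A, ∀ y ∈ B, t • x + (1 - t) • y ∈ C) :
    ENNReal.ofReal t * volume A + ENNReal.ofReal (1 - t) * volume B ≤ volume C := by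
  have hs : 0 < 1 - t := sub_pos.2 ht1
  have key := volume_add_le_of_add_subset (hA.const_smul₀ t) (hB.const_smul₀ (1 - t))
    (hA0.smul_set (a := t)) (hB0.smul_set (a := 1 - t)) (C := C) (by
      rintro _ ⟨x, hx, rfl⟩ _ ⟨y, hy, rfl⟩
      exact h x hx y hy)
  simpa [Measure.addHaar_smul, abs_of_pos ht0, abs_of_pos hs] using key

theorem lintegral_min_one_eq {α : Type*} [MeasurableSpace α] (μ : Measure α) {f : α → ℝ≥0∞}
    (hf : Measurable f) :
    ∫⁻ x, min (f x) 1 ∂μ = ∫⁻ s in Ioo (0 : ℝ) 1, μ {x | ENNReal.ofReal s < f x} := by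
  have hfin (x : α) : min (f x) 1 ≠ ∞ := ((min_le_right _ _).trans_lt ENNReal.one_lt_top).ne
  calc ∫⁻ x, min (f x) 1 ∂μ = ∫⁻ x, ENNReal.ofReal (min (f x) 1).toReal ∂μ := by
        simp only [ENNReal.ofReal_toReal (hfin _)]
    _ = ∫⁻ s in Ioi (0 : ℝ), μ {x | s < (min (f x) 1).toReal} :=
        lintegral_eq_lintegral_meas_lt μ (.of_forall fun _ ↦ ENNReal.toReal_nonneg)
          (hf.min measurable_const).ennreal_toReal.aemeasurable
    _ = ∫⁻ s in Ioo (0 : ℝ) 1, μ {x | ENNReal.ofReal s < f x} := by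
        rw [← lintegral_indicator measurableSet_Ioi, ← lintegral_indicator measurableSet_Ioo]
        congr with s
        have hiff (x : α) (hs : 0 < s) :
            s < (min (f x) 1).toReal ↔ ENNReal.ofReal s < f x ∧ s < 1 := by
          rw [← ENNReal.ofReal_lt_iff_lt_toReal hs.le (hfin x), lt_min_iff, ENNReal.ofReal_lt_one]
        by_cases h0 : 0 < s
        · by_cases h1 : s < 1 <;> simp [indicator, h0, h1, hiff]
        · simp [indicator, h0]

namespace ENNReal

theorem rpow_mul_rpow_one_sub_self {t : ℝ} (ht0 : 0 ≤ t) (ht1 : t ≤ 1) (a : ℝ≥0∞) :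
    a ^ t * a ^ (1 - t) = a := by
  rw [← ENNReal.rpow_add_of_nonneg _ _ ht0 (sub_nonneg.2 ht1), add_sub_cancel, ENNReal.rpow_one]

theorem rpow_mul_rpow_le_weighted_add {t : ℝ} (ht0 : 0 < t) (ht1 : t < 1) (a b : ℝ≥0∞) :
    a ^ t * b ^ (1 - t) ≤ ENNReal.ofReal t * a + ENNReal.ofReal (1 - t) * b := by
  have hs : 0 < 1 - t := sub_pos.2 ht1
  rcases eq_or_ne a ∞ with rfl | ha
  · simp [ENNReal.mul_top, ht0]
  rcases eq_or_ne b ∞ with rfl | hb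
  · simp [ENNReal.mul_top, ht1]
  lift a to NNReal using ha
  lift b to NNReal using hb
  rw [← ENNReal.coe_rpow_of_nonneg _ ht0.le, ← ENNReal.coe_rpow_of_nonneg _ hs.le]
  have := NNReal.geom_mean_le_arith_mean2_weighted t.toNNReal (1 - t).toNNReal a b
    (by rw [← Real.toNNReal_add ht0.le hs.le]; simp)
  rw [Real.coe_toNNReal _ ht0.le, Real.coe_toNNReal _ hs.le] at this
  unfold ENNReal.ofReal
  exact_mod_cast this

end ENNReal

/-- The one-dimensional Prékopa–Leindler inequality in arithmetic form, for functions whose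
supremum is `1`. -/
theorem lintegral_weighted_add_le {f g h : ℝ → ℝ≥0∞} (hf : Measurable f) (hg : Measurable g)
    (hh : Measurable h) {t : ℝ} (ht0 : 0 < t) (ht1 : t < 1) (hf1 : ⨆ x, f x = 1)
    (hg1 : ⨆ x, g x = 1) (H : ∀ x y, f x ^ t * g y ^ (1 - t) ≤ h (t • x + (1 - t) • y)) :
    ENNReal.ofReal t * (∫⁻ x, f x) + ENNReal.ofReal (1 - t) * ∫⁻ x, g x ≤ ∫⁻ x, h x := by
  have hs : 0 < 1 - t := sub_pos.2 ht1
  have hfm (x : ℝ) : min (f x) 1 = f x := min_eq_left (hf1 ▸ le_iSup f x)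
  have hgm (x : ℝ) : min (g x) 1 = g x := min_eq_left (hg1 ▸ le_iSup g x)
  have hmeas (k : ℝ → ℝ≥0∞) : Measurable fun s : ℝ ↦ volume {x | ENNReal.ofReal s < k x} :=
    Antitone.measurable fun s s' hss' ↦ measure_mono fun x hx ↦
      (ENNReal.ofReal_le_ofReal hss').trans_lt hx
  calc ENNReal.ofReal t * (∫⁻ x, f x) + ENNReal.ofReal (1 - t) * ∫⁻ x, g x
      = ∫⁻ s in Ioo (0 : ℝ) 1, (ENNReal.ofReal t * volume {x | ENNReal.ofReal s < f x} +
          ENNReal.ofReal (1 - t) * volume {x | ENNReal.ofReal s < g x}) := by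
        rw [lintegral_add_left ((hmeas f).const_mul _), lintegral_const_mul _ (hmeas f),
          lintegral_const_mul _ (hmeas g), ← lintegral_min_one_eq volume hf,
          ← lintegral_min_one_eq volume hg]
        simp only [hfm, hgm]
    _ ≤ ∫⁻ s in Ioo (0 : ℝ) 1, volume {x | ENNReal.ofReal s < h x} := by
        refine setLIntegral_mono (hmeas h) fun s hs01 ↦ ?_
        have hlt : ENNReal.ofReal s < 1 := ENNReal.ofReal_lt_one.2 hs01.2
        refine volume_convexCombination_le (measurableSet_lt measurable_const hf)
          (measurableSet_lt measurable_const hg) (lt_iSup_iff.1 (hlt.trans_eq hf1.symm))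
          (lt_iSup_iff.1 (hlt.trans_eq hg1.symm)) ht0 ht1 fun x hx y hy ↦ ?_
        refine lt_of_lt_of_le ?_ (H x y)
        rw [← ENNReal.rpow_mul_rpow_one_sub_self ht0.le ht1.le (ENNReal.ofReal s)]
        exact ENNReal.mul_lt_mul (ENNReal.rpow_lt_rpow hx ht0) (ENNReal.rpow_lt_rpow hy hs)
    _ = ∫⁻ x, min (h x) 1 := (lintegral_min_one_eq volume hh).symm
    _ ≤ ∫⁻ x, h x := lintegral_mono fun x ↦ min_le_left _ _

theorem prekopa_leindler_real_of_bounded {f g h : ℝ → ℝ≥0∞} (hf : Measurable f)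
    (hg : Measurable g) (hh : Measurable h) {t : ℝ} (ht0 : 0 < t) (ht1 : t < 1)
    (hf1 : ⨆ x, f x ≠ ∞) (hg1 : ⨆ x, g x ≠ ∞)
    (H : ∀ x y, f x ^ t * g y ^ (1 - t) ≤ h (t • x + (1 - t) • y)) :
    (∫⁻ x, f x) ^ t * (∫⁻ x, g x) ^ (1 - t) ≤ ∫⁻ x, h x := by
  have hs : 0 < 1 - t := sub_pos.2 ht1
  set a := ⨆ x, f x with ha
  set b := ⨆ x, g x with hb
  rcases eq_or_ne a 0 with ha0 | ha0
  · have (x : ℝ) : f x = 0 := by simpa using (le_iSup f x).trans_eq ha0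
    simp [this, ht0]
  rcases eq_or_ne b 0 with hb0 | hb0
  · have (x : ℝ) : g x = 0 := by simpa using (le_iSup g x).trans_eq hb0
    simp [this, hs]
  set c := a ^ t * b ^ (1 - t) with hc
  have hc0 : c ≠ 0 := mul_ne_zero (by simp [ha0, hf1]) (by simp [hb0, hg1])
  have hct : c ≠ ∞ := ENNReal.mul_ne_top (ENNReal.rpow_ne_top_of_nonneg ht0.le hf1)
    (ENNReal.rpow_ne_top_of_nonneg hs.le hg1)
  have hprod (u v : ℝ≥0∞) : (u / a) ^ t * (v / b) ^ (1 - t) = u ^ t * v ^ (1 - t) / c := by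
    rw [ENNReal.div_rpow_of_nonneg _ _ ht0.le, ENNReal.div_rpow_of_nonneg _ _ hs.le, hc,
      ENNReal.mul_div_mul_comm (.inr (by finiteness)) (.inl (by finiteness))]
  have hdiv {k : ℝ → ℝ≥0∞} (hk : Measurable k) (d : ℝ≥0∞) : ∫⁻ x, k x / d = (∫⁻ x, k x) / d := by
    simp only [div_eq_mul_inv]
    exact lintegral_mul_const _ hk
  have key := (ENNReal.rpow_mul_rpow_le_weighted_add ht0 ht1 _ _).trans
    (lintegral_weighted_add_le (hf.div_const a) (hg.div_const b) (hh.div_const c) ht0 ht1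
      (by rw [← ENNReal.iSup_div, ← ha, ENNReal.div_self ha0 hf1])
      (by rw [← ENNReal.iSup_div, ← hb, ENNReal.div_self hb0 hg1])
      fun x y ↦ by rw [hprod]; exact ENNReal.div_le_div_right (H x y) c)
  rw [hdiv hf, hdiv hg, hdiv hh, hprod] at key
  rwa [ENNReal.div_le_iff hc0 hct, ENNReal.div_mul_cancel hc0 hct] at key

theorem lintegral_eq_iSup_lintegral_min_natCast {α : Type*} [MeasurableSpace α] (μ : Measure α)
    {f : α → ℝ≥0∞} (hf : Measurable f) : ∫⁻ x, f x ∂μ = ⨆ n : ℕ, ∫⁻ x, min (f x) n ∂μ := by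
  rw [← lintegral_iSup (fun n ↦ hf.min measurable_const)
    fun m n hmn x ↦ min_le_min_left _ (Nat.cast_le.2 hmn)]
  refine lintegral_congr fun x ↦ ?_
  rw [← inf_iSup_eq, ENNReal.iSup_natCast, inf_top_eq]

/-- The one-dimensional Prékopa–Leindler inequality. -/
theorem prekopa_leindler_real {f g h : ℝ → ℝ≥0∞} (hf : Measurable f)
    (hg : Measurable g) (hh : Measurable h) {t : ℝ} (ht0 : 0 < t) (ht1 : t < 1)
    (H : ∀ x y, f x ^ t * g y ^ (1 - t) ≤ h (t • x + (1 - t) • y)) :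
    (∫⁻ x, f x) ^ t * (∫⁻ x, g x) ^ (1 - t) ≤ ∫⁻ x, h x := by
  have hs : 0 < 1 - t := sub_pos.2 ht1
  have hrpow (u : ℕ → ℝ≥0∞) {p : ℝ} (hp : 0 < p) : (⨆ n, u n) ^ p = ⨆ n, u n ^ p :=
    (ENNReal.orderIsoRpow p hp).map_iSup u
  have hbdd (k : ℝ → ℝ≥0∞) (n : ℕ) : ⨆ x, min (k x) n ≠ ∞ :=
    ((iSup_le fun x ↦ min_le_right _ _).trans_lt (ENNReal.natCast_lt_top n)).ne
  rw [lintegral_eq_iSup_lintegral_min_natCast _ hf, lintegral_eq_iSup_lintegral_min_natCast _ hg,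
    hrpow _ ht0, hrpow _ hs]
  simp only [ENNReal.iSup_mul, ENNReal.mul_iSup]
  refine iSup_le fun m ↦ iSup_le fun n ↦ ?_
  refine prekopa_leindler_real_of_bounded (hf.min measurable_const) (hg.min measurable_const) hh
    ht0 ht1 (hbdd f _) (hbdd g _) fun x y ↦ (H x y).trans' ?_
  gcongr <;> exact min_le_left _ _

/-- The Prékopa–Leindler inequality. -/
theorem prekopa_leindler {n : ℕ} {f g h : (Fin n → ℝ) → ℝ≥0∞} (hf : Measurable f)
    (hg : Measurable g) (hh : Measurable h) {t : ℝ} (ht0 : 0 < t) (ht1 : t < 1)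
    (H : ∀ x y, f x ^ t * g y ^ (1 - t) ≤ h (t • x + (1 - t) • y)) :
    (∫⁻ x, f x) ^ t * (∫⁻ x, g x) ^ (1 - t) ≤ ∫⁻ x, h x := by
  induction n with
  | zero =>
    simp only [Measure.volume_pi_eq_dirac default, lintegral_dirac]
    exact (H default default).trans_eq (congrArg h (Subsingleton.elim _ _))
  | succ n ih =>
    let e := (MeasurableEquiv.piFinSuccAbove (fun _ : Fin (n + 1) ↦ ℝ) 0).symm
    have he : MeasurePreserving e volume volume :=
      (volume_preserving_piFinSuccAbove (fun _ : Fin (n + 1) ↦ ℝ) 0).symm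
    have hint {k : (Fin (n + 1) → ℝ) → ℝ≥0∞} (hk : Measurable k) :
        ∫⁻ x, k x = ∫⁻ s : ℝ, ∫⁻ x : Fin n → ℝ, k (e (s, x)) := by
      rw [← he.lintegral_comp hk]
      exact lintegral_prod _ (hk.comp e.measurable).aemeasurable
    have hcomb (s s' : ℝ) (x y : Fin n → ℝ) : e (t • s + (1 - t) • s', t • x + (1 - t) • y) =
        t • e (s, x) + (1 - t) • e (s', y) := by
      ext i
      refine Fin.cases ?_ (fun j ↦ ?_) i <;> simp [e, MeasurableEquiv.piFinSuccAbove]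
    have hsec {k : (Fin (n + 1) → ℝ) → ℝ≥0∞} (hk : Measurable k) (s : ℝ) :
        Measurable fun x : Fin n → ℝ ↦ k (e (s, x)) :=
      (hk.comp e.measurable).comp measurable_prodMk_left
    have hmarg {k : (Fin (n + 1) → ℝ) → ℝ≥0∞} (hk : Measurable k) :
        Measurable fun s : ℝ ↦ ∫⁻ x : Fin n → ℝ, k (e (s, x)) :=
      (hk.comp e.measurable).lintegral_prod_right'
    rw [hint hf, hint hg, hint hh]
    refine prekopa_leindler_real (hmarg hf) (hmarg hg) (hmarg hh) ht0 ht1 fun s s' ↦ ?_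
    refine ih (hsec hf s) (hsec hg s') (hsec hh _) fun x y ↦ ?_
    rw [hcomb]
    exact H _ _

/-- A nonnegative log-concave function agrees almost everywhere with its restriction to the
interior of its support, which is measurable and again log-concave. -/
theorem exists_measurable_logConcave_ae_eq {E : Type*} [NormedAddCommGroup E] [NormedSpace ℝ E]
    [FiniteDimensional ℝ E] [MeasurableSpace E] [BorelSpace E] (ν : Measure E)
    [ν.IsAddHaarMeasure] {f : E → ℝ} (hf0 : ∀ x, 0 ≤ f x)
    (hf : ∀ x y : E, ∀ t : ℝ, 0 ≤ t → t ≤ 1 →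
      f x ^ t * f y ^ (1 - t) ≤ f (t • x + (1 - t) • y)) :
    ∃ f' : E → ℝ, Measurable f' ∧ (∀ x, 0 ≤ f' x) ∧ f =ᵐ[ν] f' ∧
      ∀ x y : E, ∀ t : ℝ, 0 < t → t < 1 →
        f' x ^ t * f' y ^ (1 - t) ≤ f' (t • x + (1 - t) • y) := by
  set D : Set E := {x | 0 < f x} with hD
  have hconc : ConcaveOn ℝ D fun x ↦ Real.log (f x) := by
    have hpos {x y : E} (hx : x ∈ D) (hy : y ∈ D) (t : ℝ) : 0 < f x ^ t * f y ^ (1 - t) :=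
      mul_pos (Real.rpow_pos_of_pos hx _) (Real.rpow_pos_of_pos hy _)
    refine ⟨fun x hx y hy a b ha hb hab ↦ ?_, fun x hx y hy a b ha hb hab ↦ ?_⟩ <;>
      obtain rfl : b = 1 - a := by linarith
    · exact (hpos hx hy a).trans_le (hf x y a ha (by linarith))
    · have := Real.log_le_log (hpos hx hy a) (hf x y a ha (by linarith))
      rwa [Real.log_mul (Real.rpow_pos_of_pos hx _).ne' (Real.rpow_pos_of_pos hy _).ne',
        Real.log_rpow hx, Real.log_rpow hy] at this
  refine ⟨(interior D).indicator f, ?_, indicator_nonneg fun x _ ↦ hf0 x, ?_, ?_⟩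
  · have hcont : ContinuousOn f (interior D) :=
      hconc.continuousOn_interior.rexp.congr fun x hx ↦
        (Real.exp_log (interior_subset hx : x ∈ D)).symm
    classical
    rw [← piecewise_eq_indicator]
    exact hcont.measurable_piecewise continuousOn_const isOpen_interior.measurableSet
  · have hnull := measure_eq_zero_iff_ae_notMem.1 (hconc.1.addHaar_frontier ν)
    filter_upwards [hnull] with x hx
    by_cases hxi : x ∈ interior D
    · rw [indicator_of_mem hxi]
    · rw [indicator_of_notMem hxi]
      have hxD : x ∉ D := fun h ↦ hx ⟨subset_closure h, hxi⟩
      exact le_antisymm (not_lt.1 hxD) (hf0 x)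
  · intro x y t ht0 ht1
    have hs : 0 < 1 - t := sub_pos.2 ht1
    have hnn := indicator_nonneg (s := interior D) (fun x _ ↦ hf0 x) (t • x + (1 - t) • y)
    by_cases hx : x ∈ interior D
    · by_cases hy : y ∈ interior D
      · rw [indicator_of_mem hx, indicator_of_mem hy,
          indicator_of_mem (hconc.1.interior hx hy ht0.le hs.le (by ring))]
        exact hf x y t ht0.le ht1.le
      · rwa [indicator_of_notMem hy, Real.zero_rpow hs.ne', mul_zero]
    · rwa [indicator_of_notMem hx, Real.zero_rpow ht0.ne', zero_mul]

end PrekopaLeindler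

/-- Prékopa's theorem: if `Z` is a random vector in `ℝ^r` whose law has a
log-concave density `f` with respect to Lebesgue measure, and
`g : ℝ^r × ℝ^r → ℝ` is concave, then `h θ = P(g(θ, Z) ≥ 0)` is log-concave. -/
theorem prekopa_logconcave_probability
    {Ω : Type*} [MeasurableSpace Ω] (μ : Measure Ω) [IsProbabilityMeasure μ]
    (r : ℕ) (Z : Ω → (Fin r → ℝ)) (hZ : Measurable Z)
    (f : (Fin r → ℝ) → ℝ) (hf0 : ∀ x, 0 ≤ f x)
    (hdens : Measure.map Z μ
      = volume.withDensity (fun x => ENNReal.ofReal (f x)))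
    (hflc : ∀ x y : Fin r → ℝ, ∀ t : ℝ, 0 ≤ t → t ≤ 1 →
      f x ^ t * f y ^ (1 - t) ≤ f (t • x + (1 - t) • y))
    (g : (Fin r → ℝ) → (Fin r → ℝ) → ℝ)
    (hg : ConcaveOn ℝ univ (fun p : (Fin r → ℝ) × (Fin r → ℝ) => g p.1 p.2)) :
    ∀ θ₁ θ₂ : Fin r → ℝ, ∀ t : ℝ, 0 ≤ t → t ≤ 1 →
      (μ {ω | 0 ≤ g θ₁ (Z ω)}).toReal ^ t
          * (μ {ω | 0 ≤ g θ₂ (Z ω)}).toReal ^ (1 - t)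
        ≤ (μ {ω | 0 ≤ g (t • θ₁ + (1 - t) • θ₂) (Z ω)}).toReal := by
  intro θ₁ θ₂ t ht0 ht1
  rcases ht0.eq_or_lt with rfl | ht0
  · simp
  rcases ht1.eq_or_lt with rfl | ht1
  · simp
  have hs : 0 < 1 - t := sub_pos.2 ht1
  obtain ⟨f', hf'm, hf'0, hff', hf'lc⟩ := exists_measurable_logConcave_ae_eq volume hf0 hflc
  have hgcont : Continuous fun p : (Fin r → ℝ) × (Fin r → ℝ) ↦ g p.1 p.2 :=
    continuousOn_univ.1 (hg.continuousOn isOpen_univ)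
  let C (θ : Fin r → ℝ) : Set (Fin r → ℝ) := {x | 0 ≤ g θ x}
  have hC (θ : Fin r → ℝ) : MeasurableSet (C θ) :=
    measurableSet_le measurable_const (hgcont.comp (Continuous.prodMk_right θ)).measurable
  let F (θ : Fin r → ℝ) : (Fin r → ℝ) → ENNReal :=
    (C θ).indicator fun x ↦ ENNReal.ofReal (f' x)
  have hF (θ : Fin r → ℝ) : Measurable (F θ) := hf'm.ennreal_ofReal.indicator (hC θ)
  have hprob (θ : Fin r → ℝ) : μ {ω | 0 ≤ g θ (Z ω)} = ∫⁻ x, F θ x := by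
    calc μ {ω | 0 ≤ g θ (Z ω)} = Measure.map Z μ (C θ) := (Measure.map_apply hZ (hC θ)).symm
      _ = ∫⁻ x in C θ, ENNReal.ofReal (f' x) := by
        have hae : (fun x ↦ ENNReal.ofReal (f x)) =ᵐ[volume] fun x ↦ ENNReal.ofReal (f' x) :=
          hff'.fun_comp ENNReal.ofReal
        rw [hdens, withDensity_congr_ae hae, withDensity_apply _ (hC θ)]
      _ = ∫⁻ x, F θ x := (lintegral_indicator (hC θ) _).symm
  rw [ENNReal.toReal_rpow, ENNReal.toReal_rpow, ← ENNReal.toReal_mul]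
  refine ENNReal.toReal_mono (measure_ne_top _ _) ?_
  rw [hprob, hprob, hprob]
  refine prekopa_leindler (hF _) (hF _) (hF _) ht0 ht1 fun x y ↦ ?_
  by_cases hx : x ∈ C θ₁
  · by_cases hy : y ∈ C θ₂
    · have hxy : t • x + (1 - t) • y ∈ C (t • θ₁ + (1 - t) • θ₂) := by
        have h := hg.2 (mem_univ (θ₁, x)) (mem_univ (θ₂, y)) ht0.le hs.le (by ring)
        exact (add_nonneg (mul_nonneg ht0.le hx) (mul_nonneg hs.le hy)).trans h
      simp only [F, indicator_of_mem hx, indicator_of_mem hy, indicator_of_mem hxy]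
      rw [ENNReal.ofReal_rpow_of_nonneg (hf'0 x) ht0.le, ENNReal.ofReal_rpow_of_nonneg (hf'0 y) hs.le,
        ← ENNReal.ofReal_mul (Real.rpow_nonneg (hf'0 x) t)]
      exact ENNReal.ofReal_le_ofReal (hf'lc x y t ht0 ht1)
    · simp [F, indicator_of_notMem hy, hs]
  · simp [F, indicator_of_notMem hx, ht0]
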